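/- arXiv:2603.11668 — 3 statements merged into one kernel-verified Lean document; each statement's English description precedes it below -/
import Mathlib

section
/- Let m ∈ ℕ, let r_i = (x_i, y_i) ∈ ℝ², and let (r_j, w_j)_{j∈N} be a finite family of nodes r_j = (x_j, y_j) ∈ ℝ² with real weights w_j. Write x_{ji} = x_j − x_i, y_{ji} = y_j − y_i. Assume the moment conditions: for every (a,b) ∈ ℕ × ℕ with 1 ≤ a + b ≤ m, ∑_{j∈N} w_j · x_{ji}^a · y_{ji}^b equals 1 if (a,b) = (1,0), and equals 0 otherwise. Then for every real polynomial P in two variables with total degree at most m, ∑_{j∈N} w_j · (P(r_j) − P(r_i)) = (∂P/∂x)(r_i). -/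
open MvPolynomial

lemma labfm_aux {ιN : Type*} (m : ℕ) (xi yi : ℝ)
    (N : Finset ιN) (xj yj w : ιN → ℝ)
    (hmom : ∀ a b : ℕ, 1 ≤ a + b → a + b ≤ m →
      ∑ j ∈ N, w j * (xj j - xi) ^ a * (yj j - yi) ^ b =
        if (a, b) = (1, 0) then (1 : ℝ) else 0) (b : ℕ) :
    ∀ a p q : ℕ, p + q + a + b ≤ m →
      ∑ j ∈ N, w j * ((xj j - xi) ^ p * (yj j - yi) ^ q * xj j ^ a * yj j ^ b
        - 0 ^ p * 0 ^ q * xi ^ a * yi ^ b) =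
      p * 0 ^ (p - 1) * 0 ^ q * xi ^ a * yi ^ b
        + 0 ^ p * 0 ^ q * (a * xi ^ (a - 1)) * yi ^ b := by
  induction b with
  | zero =>
    intro a
    induction a with
    | zero =>
      intro p q h
      by_cases h0 : p + q = 0
      · obtain ⟨rfl, rfl⟩ : p = 0 ∧ q = 0 := by omega
        simp
      · have h1 := hmom p q (by omega) (by omega)
        have hz : (0 : ℝ) ^ p * 0 ^ q = 0 := by
          rw [← pow_add, zero_pow h0]
        simp only [hz, pow_zero, mul_one, sub_zero, ← mul_assoc, h1]
        rcases p with _ | _ | p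
        · simp
        · rcases q with _ | q <;> simp
        · simp
    | succ a ih =>
      intro p q h
      have h1 := ih (p + 1) q (by omega)
      have h2 := ih p q (by omega)
      have key : ∀ j, w j * ((xj j - xi) ^ p * (yj j - yi) ^ q * xj j ^ (a + 1) * yj j ^ 0
        - 0 ^ p * 0 ^ q * xi ^ (a + 1) * yi ^ 0) =
        w j * ((xj j - xi) ^ (p + 1) * (yj j - yi) ^ q * xj j ^ a * yj j ^ 0
        - 0 ^ (p + 1) * 0 ^ q * xi ^ a * yi ^ 0) +
        xi * (w j * ((xj j - xi) ^ p * (yj j - yi) ^ q * xj j ^ a * yj j ^ 0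
        - 0 ^ p * 0 ^ q * xi ^ a * yi ^ 0)) := by
        intro j; ring
      rw [Finset.sum_congr rfl (fun j _ => key j), Finset.sum_add_distrib, ← Finset.mul_sum, h1, h2]
      rcases p with _ | p <;> rcases a with _ | a <;> simp <;> ring
  | succ b ih =>
    intro a p q h
    have h1 := ih a p (q + 1) (by omega)
    have h2 := ih a p q (by omega)
    have key : ∀ j, w j * ((xj j - xi) ^ p * (yj j - yi) ^ q * xj j ^ a * yj j ^ (b + 1)
      - 0 ^ p * 0 ^ q * xi ^ a * yi ^ (b + 1)) =
      w j * ((xj j - xi) ^ p * (yj j - yi) ^ (q + 1) * xj j ^ a * yj j ^ b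
      - 0 ^ p * 0 ^ (q + 1) * xi ^ a * yi ^ b) +
      yi * (w j * ((xj j - xi) ^ p * (yj j - yi) ^ q * xj j ^ a * yj j ^ b
      - 0 ^ p * 0 ^ q * xi ^ a * yi ^ b)) := by
      intro j; ring
    rw [Finset.sum_congr rfl (fun j _ => key j), Finset.sum_add_distrib, ← Finset.mul_sum, h1, h2]
    simp only [pow_succ (0 : ℝ) q]
    ring

/-- Explicit LABFM consistency for the first derivative in `x`. -/
theorem explicit_labfm_consistency_dx {ιN : Type*} (m : ℕ) (xi yi : ℝ)
    (N : Finset ιN) (xj yj w : ιN → ℝ)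
    (hmom : ∀ a b : ℕ, 1 ≤ a + b → a + b ≤ m →
      ∑ j ∈ N, w j * (xj j - xi) ^ a * (yj j - yi) ^ b =
        if (a, b) = (1, 0) then (1 : ℝ) else 0) :
    ∀ P : MvPolynomial (Fin 2) ℝ, P.totalDegree ≤ m →
      ∑ j ∈ N, w j * (eval ![xj j, yj j] P - eval ![xi, yi] P) =
        eval ![xi, yi] (pderiv 0 P) := by
  intro P hP
  have hmon : ∀ d ∈ P.support, ∑ j ∈ N, w j * (eval ![xj j, yj j] (monomial d (coeff d P))
      - eval ![xi, yi] (monomial d (coeff d P))) =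
        eval ![xi, yi] (pderiv 0 (monomial d (coeff d P))) := by
    intro d hd
    have hdeg : d 0 + d 1 ≤ m := by
      have := (le_totalDegree hd).trans hP
      rwa [Finsupp.sum_fintype _ _ (fun _ => rfl), Fin.sum_univ_two] at this
    have h := labfm_aux m xi yi N xj yj w hmom (d 1) (d 0) 0 0 (by omega)
    simp only [pow_zero, one_mul, Nat.cast_zero, zero_mul, zero_add] at h
    rw [pderiv_monomial]
    simp only [eval_monomial, Finsupp.prod_pow, Fin.prod_univ_two]
    simp
    rw [mul_assoc, ← mul_assoc (d 0 : ℝ), ← h, Finset.mul_sum]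
    refine Finset.sum_congr rfl fun j _ => ?_
    ring
  rw [P.as_sum]
  simp only [map_sum]
  rw [← Finset.sum_congr rfl hmon, Finset.sum_comm]
  refine Finset.sum_congr rfl fun j _ => ?_
  rw [← Finset.sum_sub_distrib, Finset.mul_sum]
end

section
/- Let m ∈ ℕ, let r_i = (x_i, y_i) ∈ ℝ², and let (r_j, w_j)_{j∈N} be a finite family of nodes r_j = (x_j, y_j) ∈ ℝ² with real weights w_j. Write x_{ji} = x_j − x_i, y_{ji} = y_j − y_i. Assume the moment conditions: for every (a,b) ∈ ℕ × ℕ with 1 ≤ a + b ≤ m, ∑_{j∈N} w_j · x_{ji}^a · y_{ji}^b equals 2 if (a,b) = (2,0) or (a,b) = (0,2), and equals 0 otherwise. Then for every real polynomial P in two variables with total degree at most m, ∑_{j∈N} w_j · (P(r_j) − P(r_i)) = (ΔP)(r_i), where ΔP = ∂²P/∂x² + ∂²P/∂y². -/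
open MvPolynomial

/-- Explicit LABFM consistency for the Laplacian. -/
theorem explicit_labfm_consistency_laplacian {ιN : Type*} (m : ℕ) (xi yi : ℝ)
    (N : Finset ιN) (xj yj w : ιN → ℝ)
    (hmom : ∀ a b : ℕ, 1 ≤ a + b → a + b ≤ m →
      ∑ j ∈ N, w j * (xj j - xi) ^ a * (yj j - yi) ^ b =
        if (a, b) = (2, 0) ∨ (a, b) = (0, 2) then (2 : ℝ) else 0) :
    ∀ P : MvPolynomial (Fin 2) ℝ, P.totalDegree ≤ m →
      ∑ j ∈ N, w j * (eval ![xj j, yj j] P - eval ![xi, yi] P) =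
        eval ![xi, yi] (pderiv 0 (pderiv 0 P) + pderiv 1 (pderiv 1 P)) := by
  let G : MvPolynomial (Fin 2) ℝ → Prop := fun P =>
      ∑ j ∈ N, w j * (eval ![xj j, yj j] P - eval ![xi, yi] P) =
        eval ![xi, yi] (pderiv 0 (pderiv 0 P) + pderiv 1 (pderiv 1 P))
  have hadd : ∀ P Q, G P → G Q → G (P + Q) := by
    intro P Q hP hQ
    simp only [G, map_add] at hP hQ ⊢
    have : ∀ j ∈ N, w j * (eval ![xj j, yj j] P + eval ![xj j, yj j] Q
        - (eval ![xi, yi] P + eval ![xi, yi] Q)) =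
        w j * (eval ![xj j, yj j] P - eval ![xi, yi] P)
        + w j * (eval ![xj j, yj j] Q - eval ![xi, yi] Q) := by intros; ring
    rw [Finset.sum_congr rfl this, Finset.sum_add_distrib, hP, hQ]
    ring
  have hmul : ∀ (c : ℝ) P, G P → G (C c * P) := by
    intro c P hP
    simp only [G, map_add, pderiv_C_mul, map_mul, eval_C, smul_eval] at hP ⊢
    have : ∀ j ∈ N, w j * (c * eval ![xj j, yj j] P - c * eval ![xi, yi] P) =
        c * (w j * (eval ![xj j, yj j] P - eval ![xi, yi] P)) := by intros; ring
    rw [Finset.sum_congr rfl this, ← Finset.mul_sum, hP]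
    simp [smul_eq_C_mul]
    try ring
  have hbase : ∀ k l : ℕ, k + l ≤ m →
      G ((X 0 - C xi) ^ k * (X 1 - C yi) ^ l) := by
    intro k l hkl
    by_cases h0 : k + l = 0
    · obtain ⟨rfl, rfl⟩ : k = 0 ∧ l = 0 := by omega
      simp [G]
    have hm := hmom k l (by omega) hkl
    have hz : (0 : ℝ) ^ k * 0 ^ l = 0 := by
      rw [← pow_add]; exact zero_pow h0
    have hL : ∑ j ∈ N, w j * (eval ![xj j, yj j] ((X 0 - C xi) ^ k * (X 1 - C yi) ^ l)
        - eval ![xi, yi] ((X 0 - C xi) ^ k * (X 1 - C yi) ^ l)) =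
        ∑ j ∈ N, w j * (xj j - xi) ^ k * (yj j - yi) ^ l := by
      refine Finset.sum_congr rfl fun j _ => ?_
      simp [hz, mul_assoc]
    simp only [G]
    rw [hL, hm]
    clear hm hL hz
    have e1 : pderiv (R := ℝ) (0 : Fin 2) (X 1) = 0 := pderiv_X_of_ne (by decide)
    have e2 : pderiv (R := ℝ) (1 : Fin 2) (X 0) = 0 := pderiv_X_of_ne (by decide)
    rcases k with _ | _ | _ | k <;> rcases l with _ | _ | _ | l <;>
      simp [Derivation.leibniz, Derivation.leibniz_pow, e1, e2] <;> try norm_num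
  have hgen : ∀ n a b k l : ℕ, a + b = n → a + b + k + l ≤ m →
      G (X 0 ^ a * X 1 ^ b * ((X 0 - C xi) ^ k * (X 1 - C yi) ^ l)) := by
    intro n
    induction n with
    | zero =>
      intro a b k l hn h
      obtain ⟨rfl, rfl⟩ : a = 0 ∧ b = 0 := by omega
      simpa using hbase k l (by omega)
    | succ n ih =>
      intro a b k l hn h
      rcases a with _ | a
      · obtain ⟨b, rfl⟩ : ∃ b', b = b' + 1 := ⟨b - 1, by omega⟩
        have := hadd _ _ (ih 0 b k (l + 1) (by omega) (by omega))
          (hmul yi _ (ih 0 b k l (by omega) (by omega)))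
        convert this using 1
        ring
      · have := hadd _ _ (ih a b (k + 1) l (by omega) (by omega))
          (hmul xi _ (ih a b k l (by omega) (by omega)))
        convert this using 1
        ring
  intro P hP
  change G P
  rw [P.as_sum]
  have hzero : G 0 := by simp [G]
  refine Finset.sum_induction _ G hadd hzero fun s hs => ?_
  have hd : s 0 + s 1 ≤ m := by
    have := (le_totalDegree hs).trans hP
    simpa [Finsupp.sum_fintype] using this
  have := hmul (coeff s P) _ (hgen _ (s 0) (s 1) 0 0 rfl (by omega))
  rw [monomial_eq, Finsupp.prod_fintype _ _ (by simp)]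
  simpa using this
end

section
/- Let m ∈ ℕ and let S_m = {(a,b) ∈ ℕ × ℕ : 1 ≤ a + b ≤ m}. Let r_i = (x_i, y_i) ∈ ℝ², let (r_j)_{j∈N} be a finite family of nodes with, for each j, a basis-function vector W_j : S_m → ℝ, and let (r_q, α_q)_{q∈M} be a finite family of nodes with real coefficients α_q. Write x_{ji} = x_j − x_i, etc. Define the moments matrix M by M_{(a,b),(c,d)} = ∑_{j∈N} x_{ji}^a y_{ji}^b · W_j(c,d), and the right-hand-side vector C̃ by C̃(a,b) = ∑_{q∈M} α_q · a · x_{qi}^{a−1} y_{qi}^b (the term being 0 when a = 0). Suppose Ψ : S_m → ℝ satisfies the local linear system M · Ψ = C̃ (as vectors indexed by S_m). Then the weights w_j := ∑_{(c,d)∈S_m} W_j(c,d) · Ψ(c,d) yield order-m compact consistency for ∂/∂x: for every real polynomial P in two variables with total degree at most m, ∑_{j∈N} w_j (P(r_j) − P(r_i)) = ∑_{q∈M} α_q (∂P/∂x)(r_q). -/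
open MvPolynomial

lemma shift_degree (P : MvPolynomial (Fin 2) ℝ) (a b : ℝ) (m : ℕ) (h : P.totalDegree ≤ m) :
    (bind₁ ![X 0 + C a, X 1 + C b] P : MvPolynomial (Fin 2) ℝ).totalDegree ≤ m := by
  have hX : ∀ (i : Fin 2) (c : ℝ), (X i + C c : MvPolynomial (Fin 2) ℝ).totalDegree ≤ 1 := by
    intro i c
    refine (totalDegree_add _ _).trans ?_
    simp
  conv_lhs => rw [P.as_sum]
  rw [map_sum]
  refine totalDegree_finsetSum_le ?_
  intro s hs
  have h1 := (le_totalDegree hs).trans h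
  rw [Finsupp.sum_fintype _ _ (fun _ => rfl), Fin.sum_univ_two] at h1
  rw [bind₁_monomial, ← Finsupp.prod, Finsupp.prod_fintype _ _ (fun _ => pow_zero _),
    Fin.prod_univ_two]
  refine (totalDegree_mul _ _).trans ?_
  rw [totalDegree_C, zero_add]
  refine (totalDegree_mul _ _).trans (le_trans (add_le_add ?_ ?_) h1)
  · refine (totalDegree_pow _ _).trans ?_
    have := hX 0 a
    simpa using Nat.mul_le_mul_left (s 0) this
  · refine (totalDegree_pow _ _).trans ?_
    have := hX 1 b
    simpa using Nat.mul_le_mul_left (s 1) this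

lemma shift_shift (P : MvPolynomial (Fin 2) ℝ) (a b : ℝ) :
    bind₁ ![X 0 - C a, X 1 - C b]
      (bind₁ ![X 0 + C a, X 1 + C b] P : MvPolynomial (Fin 2) ℝ) = P := by
  rw [bind₁_bind₁]
  have : (fun i : Fin 2 => (bind₁ ![X 0 - C a, X 1 - C b])
      ((![X 0 + C a, X 1 + C b] : Fin 2 → MvPolynomial (Fin 2) ℝ) i)) = X := by
    funext i
    fin_cases i <;> simp
  rw [this, bind₁_X_left]
  rfl

/-- If `Ψ` solves the local linear system `M Ψ = C̃` built from the moments of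
the stencil, then the weights `w_j = ∑ W_j(c,d) Ψ(c,d)` give order-`m` compact
consistency for `∂/∂x`. -/
theorem labfm_linear_system_gives_consistency_dx {ιN ιM : Type*} (m : ℕ) (xi yi : ℝ)
    (N : Finset ιN) (xj yj : ιN → ℝ)
    (M : Finset ιM) (xq yq α : ιM → ℝ)
    (S : Finset (ℕ × ℕ))
    (hS : S = (Finset.range (m + 1) ×ˢ Finset.range (m + 1)).filter
      (fun p => 1 ≤ p.1 + p.2 ∧ p.1 + p.2 ≤ m))
    (W : ιN → ℕ × ℕ → ℝ) (Ψ : ℕ × ℕ → ℝ)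
    (hsys : ∀ p ∈ S,
      ∑ cd ∈ S, (∑ j ∈ N, (xj j - xi) ^ p.1 * (yj j - yi) ^ p.2 * W j cd) * Ψ cd =
        ∑ q ∈ M, α q * ((p.1 : ℝ) * (xq q - xi) ^ (p.1 - 1) * (yq q - yi) ^ p.2))
    (w : ιN → ℝ) (hw : ∀ j, w j = ∑ cd ∈ S, W j cd * Ψ cd) :
    ∀ P : MvPolynomial (Fin 2) ℝ, P.totalDegree ≤ m →
      ∑ j ∈ N, w j * (eval ![xj j, yj j] P - eval ![xi, yi] P) =
        ∑ q ∈ M, α q * eval ![xq q, yq q] (pderiv 0 P) := by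
  intro P hP
  have hmom : ∀ a b : ℕ, a + b ≤ m →
      ∑ j ∈ N, w j * ((xj j - xi) ^ a * (yj j - yi) ^ b - 0 ^ a * 0 ^ b) =
        ∑ q ∈ M, α q * ((a : ℝ) * (xq q - xi) ^ (a - 1) * (yq q - yi) ^ b) := by
    intro a b hab
    by_cases h0 : a + b = 0
    · obtain ⟨rfl, rfl⟩ : a = 0 ∧ b = 0 := by omega
      simp
    · have hz : (0 : ℝ) ^ a * 0 ^ b = 0 := by rw [← pow_add]; exact zero_pow h0
      have hmem : (a, b) ∈ S := by
        rw [hS]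
        simp only [Finset.mem_filter, Finset.mem_product, Finset.mem_range]
        omega
      rw [← hsys (a, b) hmem]
      simp only [hz, sub_zero, hw, Finset.sum_mul]
      rw [Finset.sum_comm]
      refine Finset.sum_congr rfl fun _ _ => Finset.sum_congr rfl fun _ _ => ?_
      ring
  obtain ⟨Q, hQ, rfl⟩ : ∃ Q : MvPolynomial (Fin 2) ℝ, Q.totalDegree ≤ m ∧
      bind₁ ![X 0 - C xi, X 1 - C yi] Q = P :=
    ⟨_, shift_degree P xi yi m hP, shift_shift P xi yi⟩
  rw [Q.as_sum]
  simp only [map_sum, ← Finset.sum_sub_distrib, Finset.mul_sum]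
  rw [Finset.sum_comm, Finset.sum_comm (s := M)]
  refine Finset.sum_congr rfl fun s hs => ?_
  have h1 := (le_totalDegree hs).trans hQ
  rw [Finsupp.sum_fintype _ _ (fun _ => rfl), Fin.sum_univ_two] at h1
  have h2 := congrArg (fun t => coeff s Q * t) (hmom _ _ h1)
  simp only [Finset.mul_sum] at h2
  rw [bind₁_monomial, ← Finsupp.prod, Finsupp.prod_fintype _ _ (fun _ => pow_zero _),
    Fin.prod_univ_two]
  refine Eq.trans (Finset.sum_congr rfl fun j _ => ?_) (h2.trans (Finset.sum_congr rfl fun q _ => ?_))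
  · simp
    ring
  · simp [Derivation.leibniz, Derivation.leibniz_pow, pderiv_X]
    ring
end
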